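/- arXiv:1708.06092 — 3 statements merged into one kernel-verified Lean document; each statement's English description precedes it below -/
import Mathlib

section
/- Let $f \in \mathbb{C}[X_0,X_1,X_2]$ and $g \in \mathbb{C}[X_3,X_4,X_5]$ be homogeneous polynomials of degree 3, and set $F(z_0,\dots,z_5) = f(z_0,z_1,z_2) + g(z_3,z_4,z_5)$. For every nonzero $z \in \mathbb{C}^6$ with $F(z) = 0$ and $f(z_0,z_1,z_2) \neq 0$, there exist $x, y \in \mathbb{C}^3$ and $v, w \in \mathbb{C}$ with $f(x) + v^3 = 0$ and $g(y) + w^3 = 0$ such that $(w x_0, w x_1, w x_2, -v y_0, -v y_1, -v y_2) = z$. In particular, the Shioda map $Y_1 \times Y_2 \dashrightarrow Y$ is dominant: its image contains the nonempty Zariski-open subset of $Y$ where $f \neq 0$. -/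
open MvPolynomial

/-- A homogeneous polynomial scales by the power of its degree. -/
theorem eval_smul_of_isHomogeneous {n : ℕ} (p : MvPolynomial (Fin 3) ℂ)
    (hp : p.IsHomogeneous n) (c : ℂ) (x : Fin 3 → ℂ) :
    eval (c • x) p = c ^ n * eval x p := by
  rw [eval_eq, eval_eq, Finset.mul_sum]
  refine Finset.sum_congr rfl fun d hd => ?_
  have hdeg : ∑ i ∈ d.support, d i = n := by
    rw [← Finsupp.degree_apply, Finsupp.degree_eq_weight_one]
    exact hp (mem_support_iff.mp hd)
  simp only [Pi.smul_apply, smul_eq_mul, mul_pow, Finset.prod_mul_distrib]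
  rw [Finset.prod_pow_eq_pow_sum, hdeg]
  ring

/-- Every nonzero `z ∈ ℂ⁶` with `F(z) = 0` and `f(z₀,z₁,z₂) ≠ 0` is in the
image of the Shioda map: there are `x, y ∈ ℂ³` and `v, w ∈ ℂ` with `f(x) + v³ = 0`,
`g(y) + w³ = 0` and `(w·x, -v·y) = z`. In particular the Shioda map is dominant. -/
theorem stmt_7 (f g : MvPolynomial (Fin 3) ℂ)
    (hf : f.IsHomogeneous 3) (hg : g.IsHomogeneous 3)
    (F : MvPolynomial (Fin 6) ℂ)
    (hF : F = rename (Fin.castAdd 3) f + rename (Fin.natAdd 3) g) :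
    ∀ z : Fin 6 → ℂ, z ≠ 0 → eval z F = 0 →
      eval (fun i : Fin 3 => z (Fin.castAdd 3 i)) f ≠ 0 →
      ∃ (x y : Fin 3 → ℂ) (v w : ℂ),
        eval x f + v ^ 3 = 0 ∧ eval y g + w ^ 3 = 0 ∧
        (Fin.append (w • x) ((-v) • y) : Fin 6 → ℂ) = z := by
  intro z _ hz ha
  set a := eval (fun i : Fin 3 => z (Fin.castAdd 3 i)) f with haf
  have hga : eval (fun i : Fin 3 => z (Fin.natAdd 3 i)) g = -a := by
    rw [hF, map_add, eval_rename, eval_rename] at hz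
    exact eq_neg_of_add_eq_zero_right hz
  obtain ⟨v, hv⟩ := IsAlgClosed.exists_pow_nat_eq (-a) (n := 3) (by norm_num)
  have hv0 : v ≠ 0 := by
    rintro rfl
    apply ha
    simpa using hv.symm
  refine ⟨fun i => z (Fin.castAdd 3 i), (-v⁻¹) • (fun i => z (Fin.natAdd 3 i)), v, 1, ?_, ?_, ?_⟩
  · rw [hv, ← haf]; ring
  · rw [eval_smul_of_isHomogeneous g hg, hga]
    have hv3 : a = -v ^ 3 := by rw [hv, neg_neg]
    rw [hv3]
    field_simp
    ring
  · rw [one_smul, smul_smul, neg_mul_neg, mul_inv_cancel₀ hv0, one_smul]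
    exact Fin.append_castAdd_natAdd
end

section
/- Let $f \in \mathbb{C}[X_0,X_1,X_2]$ and $g \in \mathbb{C}[X_3,X_4,X_5]$ be homogeneous polynomials of degree 3 that each define a smooth plane curve, set $F(z_0,\dots,z_5) = f(z_0,z_1,z_2) + g(z_3,z_4,z_5)$, let $\omega$ be a primitive third root of unity, and let $u(z_0,\dots,z_5) = (z_0,z_1,z_2,\omega z_3,\omega z_4,\omega z_5)$. Then a 2-dimensional linear subspace $L \subseteq \mathbb{C}^6$ satisfies both $F|_L \equiv 0$ and $u(L) = L$ if and only if there exist nonzero vectors $a, b \in \mathbb{C}^3$ with $f(a) = 0$ and $g(b) = 0$ such that $L = \mathrm{span}\big((a_0,a_1,a_2,0,0,0),\,(0,0,0,b_0,b_1,b_2)\big)$. In other words, the fixed points of the induced automorphism $u_X$ on the lines of the cubic fourfold $Y = \{F=0\}$ are exactly the lines joining a point of the plane cubic $\{f = 0\}$ to a point of the plane cubic $\{g = 0\}$. -/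
open MvPolynomial

theorem chainRule (f : MvPolynomial (Fin 3) ℂ) (p : Fin 3 → Polynomial ℂ) :
    Polynomial.derivative (aeval p f) =
      ∑ i, aeval p (pderiv i f) * Polynomial.derivative (p i) := by
  induction f using MvPolynomial.induction_on with
  | C a => simp
  | add p q hp hq => simp [hp, hq, add_mul, Finset.sum_add_distrib]
  | mul_X q n hq =>
    have h1 : ∀ i, aeval p (pderiv i (q * X n)) * Polynomial.derivative (p i) =
        aeval p (pderiv i q) * Polynomial.derivative (p i) * p n +
          (if n = i then aeval p q * Polynomial.derivative (p i) else 0) := by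
      intro i
      rw [Derivation.leibniz, smul_eq_mul, smul_eq_mul, pderiv_X, map_add, map_mul, map_mul,
        aeval_X]
      by_cases h : n = i
      · subst h
        rw [Pi.single_eq_same, map_one, if_pos rfl]
        ring
      · rw [Pi.single_eq_of_ne h, map_zero, if_neg h]
        ring
    rw [Finset.sum_congr rfl fun i _ => h1 i, Finset.sum_add_distrib, ← Finset.sum_mul, ← hq,
      map_mul, aeval_X, Polynomial.derivative_mul, Finset.sum_ite_eq]
    simp

theorem eval_line (f : MvPolynomial (Fin 3) ℂ) (x a : Fin 3 → ℂ) (t : ℂ) :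
    Polynomial.eval t (aeval (fun i => Polynomial.C (x i) + Polynomial.C (a i) * Polynomial.X) f)
      = eval (x + t • a) f := by
  induction f using MvPolynomial.induction_on with
  | C a => simp
  | add p q hp hq => simp [hp, hq]
  | mul_X q n hq =>
    rw [map_mul, map_mul, Polynomial.eval_mul, hq, aeval_X, eval_X]
    congr 1
    simp only [Polynomial.eval_add, Polynomial.eval_mul, Polynomial.eval_C, Polynomial.eval_X,
      Pi.add_apply, Pi.smul_apply, smul_eq_mul, mul_comm t]

theorem eval_smul_hom {f : MvPolynomial (Fin 3) ℂ} {n : ℕ} (hf : f.IsHomogeneous n)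
    (t : ℂ) (x : Fin 3 → ℂ) : eval (t • x) f = t ^ n * eval x f := by
  rw [MvPolynomial.eval_eq, MvPolynomial.eval_eq, Finset.mul_sum]
  refine Finset.sum_congr rfl fun d hd => ?_
  have h := hf (mem_support_iff.mp hd)
  have h2 : ∑ i, d i = n := by
    rw [← h, Finsupp.weight_apply, Finsupp.sum_fintype] <;> simp
  have : ∏ i ∈ d.support, (t • x) i ^ d i = t ^ n * ∏ i ∈ d.support, x i ^ d i := by
    simp only [Pi.smul_apply, smul_eq_mul, mul_pow, Finset.prod_mul_distrib]
    congr 1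
    rw [Finset.prod_pow_eq_pow_sum, ← h2]
    congr 1
    exact Finset.sum_subset (Finset.subset_univ _) (by simp)
  rw [this]; ring

/-- A binary quadratic form has a nontrivial zero. -/
theorem exists_zero {D : MvPolynomial (Fin 3) ℂ} (hD : D.IsHomogeneous 2) (a b : Fin 3 → ℂ) :
    ∃ s t : ℂ, (s ≠ 0 ∨ t ≠ 0) ∧ eval (s • a + t • b) D = 0 := by
  by_contra! H
  let P : Polynomial ℂ :=
    aeval (fun i => Polynomial.C (a i) + Polynomial.C (b i) * Polynomial.X) D
  let Q : Polynomial ℂ :=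
    aeval (fun i => Polynomial.C (b i) + Polynomial.C (a i) * Polynomial.X) D
  have hP : ∀ t, P.eval t = eval (a + t • b) D := eval_line D a b
  have hQ : ∀ t, Q.eval t = eval (b + t • a) D := eval_line D b a
  have hPdeg : P.degree = 0 := by
    by_contra hd
    obtain ⟨t, ht⟩ := IsAlgClosed.exists_root P hd
    have := H 1 t (by simp)
    rw [one_smul, ← hP] at this
    exact this ht
  obtain ⟨k, hk⟩ : ∃ k, P = Polynomial.C k := ⟨_, Polynomial.eq_C_of_degree_eq_zero hPdeg⟩
  have hQ2 : Q = Polynomial.C k * Polynomial.X ^ 2 := by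
    apply Polynomial.eq_of_infinite_eval_eq
    refine Set.Infinite.mono (s := {0}ᶜ) ?_ (Set.finite_singleton (0:ℂ)).infinite_compl
    intro t ht
    have ht : t ≠ 0 := ht
    have e : b + t • a = t • (a + t⁻¹ • b) := by
      rw [smul_add, smul_smul, mul_inv_cancel₀ ht, one_smul, add_comm]
    simp only [Set.mem_ofPred_eq]
    rw [hQ, e, eval_smul_hom hD, ← hP, hk]
    rw [Polynomial.eval_C, Polynomial.eval_mul, Polynomial.eval_C, Polynomial.eval_pow,
      Polynomial.eval_X, mul_comm]
  have := H 0 1 (by simp)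
  apply this
  have h0 := hQ 0
  rw [hQ2] at h0
  simpa using h0.symm

theorem no_line {f : MvPolynomial (Fin 3) ℂ} (hf : f.IsHomogeneous 3)
    (hsm : ∀ x : Fin 3 → ℂ, x ≠ 0 → eval x f = 0 → ∃ i : Fin 3, eval x (pderiv i f) ≠ 0)
    (a b : Fin 3 → ℂ) (hab : LinearIndependent ℂ ![a, b])
    (h : ∀ s t : ℂ, eval (s • a + t • b) f = 0) : False := by
  have hdir : ∀ x v : Fin 3 → ℂ, (∀ t : ℂ, eval (x + t • v) f = 0) →
      ∑ i, eval x (pderiv i f) * v i = 0 := by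
    intro x v hx
    have h0 : aeval (fun i => Polynomial.C (x i) + Polynomial.C (v i) * Polynomial.X) f
        = (0 : Polynomial ℂ) := by
      apply Polynomial.funext
      intro t
      rw [eval_line, hx]; simp
    have := congrArg (Polynomial.eval 0) (chainRule f
      (fun i => Polynomial.C (x i) + Polynomial.C (v i) * Polynomial.X))
    rw [h0] at this
    simpa [Polynomial.eval_finsetSum, eval_line] using this.symm
  obtain ⟨c, hc⟩ : ∃ c, c ∉ Submodule.span ℂ (Set.range ![a, b]) := by
    by_contra! H
    have htop : Submodule.span ℂ (Set.range ![a, b]) = ⊤ := by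
      rw [eq_top_iff]; intro c _; exact H c
    have := finrank_span_eq_card hab
    rw [htop] at this
    simp at this
  have hli : LinearIndependent ℂ (Fin.cons c ![a, b] : Fin 3 → (Fin 3 → ℂ)) :=
    linearIndependent_finCons.mpr ⟨hab, hc⟩
  have hspan := hli.span_eq_top_of_card_eq_finrank (by simp)
  let D : MvPolynomial (Fin 3) ℂ := ∑ i, C (c i) * pderiv i f
  have hD : D.IsHomogeneous 2 := by
    apply IsHomogeneous.sum
    intro i _
    simpa using (isHomogeneous_C (Fin 3) (c i)).mul (hf.pderiv (i := i))
  obtain ⟨s, t, hst, hz⟩ := exists_zero hD a b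
  set x := s • a + t • b with hx
  have hx0 : x ≠ 0 := by
    intro h0
    have := LinearIndependent.pair_iff.mp hab s t h0
    rcases hst with h | h
    · exact h this.1
    · exact h this.2
  obtain ⟨i, hi⟩ := hsm x hx0 (h s t)
  let φ : (Fin 3 → ℂ) →ₗ[ℂ] ℂ := ∑ i, eval x (pderiv i f) • LinearMap.proj i
  have hφ : ∀ v, φ v = ∑ i, eval x (pderiv i f) * v i := by
    intro v; simp [φ]
  have hφ0 : φ = 0 := by
    apply LinearMap.ext_on_range hspan
    intro j
    rw [hφ, LinearMap.zero_apply]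
    fin_cases j
    · simpa [D, mul_comm] using hz
    · apply hdir
      intro r
      have : x + r • a = (s + r) • a + t • b := by rw [hx, add_smul]; abel
      show eval (x + r • a) f = 0
      rw [this, h]
    · apply hdir
      intro r
      have : x + r • b = s • a + (t + r) • b := by rw [hx, add_smul]; abel
      show eval (x + r • b) f = 0
      rw [this, h]
  apply hi
  have := hφ (Pi.single i 1)
  rw [hφ0] at this
  simpa [Pi.single_apply] using this.symm

theorem eval_append (f g : MvPolynomial (Fin 3) ℂ) (x y : Fin 3 → ℂ) :
    eval (Fin.append x y : Fin 6 → ℂ) (rename (Fin.castAdd 3) f + rename (Fin.natAdd 3) g) =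
      eval x f + eval y g := by
  rw [map_add, eval_rename, eval_rename]
  have h1 : (Fin.append x y : Fin 6 → ℂ) ∘ Fin.castAdd 3 = x := by
    ext i; exact Fin.append_left x y i
  have h2 : (Fin.append x y : Fin 6 → ℂ) ∘ Fin.natAdd 3 = y := by
    ext i; exact Fin.append_right x y i
  erw [h1, h2]

theorem append_lin (s t : ℂ) (x y x' y' : Fin 3 → ℂ) :
    s • (Fin.append x y : Fin 6 → ℂ) + t • (Fin.append x' y' : Fin 6 → ℂ) =
      Fin.append (s • x + t • x') (s • y + t • y') := by
  ext i
  refine Fin.addCases (m := 3) (n := 3) (fun i => ?_) (fun i => ?_) i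
  · simp only [Pi.add_apply, Pi.smul_apply]
    erw [Fin.append_left, Fin.append_left, Fin.append_left]; rfl
  · simp only [Pi.add_apply, Pi.smul_apply]
    erw [Fin.append_right, Fin.append_right, Fin.append_right]; rfl

theorem append_eq_zero' (x y : Fin 3 → ℂ) (h : (Fin.append x y : Fin 6 → ℂ) = 0) :
    x = 0 ∧ y = 0 := by
  constructor
  · ext i
    have := congrFun h (Fin.castAdd 3 i)
    erw [Fin.append_left] at this; exact this
  · ext i
    have := congrFun h (Fin.natAdd 3 i)
    erw [Fin.append_right] at this; exact this

theorem exists_append (z : Fin 6 → ℂ) : ∃ x y : Fin 3 → ℂ, z = (Fin.append x y : Fin 6 → ℂ) :=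
  ⟨fun i => z (Fin.castAdd 3 i), fun i => z (Fin.natAdd 3 i),
    (Fin.append_castAdd_natAdd (m := 3) (n := 3) (f := z)).symm⟩

theorem li_pair (a b : Fin 3 → ℂ) (ha : a ≠ 0) (hb : b ≠ 0) :
    LinearIndependent ℂ ![(Fin.append a (0 : Fin 3 → ℂ) : Fin 6 → ℂ),
      (Fin.append (0 : Fin 3 → ℂ) b : Fin 6 → ℂ)] := by
  rw [LinearIndependent.pair_iff]
  intro s t h
  rw [append_lin] at h
  have := append_eq_zero' _ _ h
  simpa [ha, hb] using this

theorem finrank_pair (a b : Fin 3 → ℂ) (ha : a ≠ 0) (hb : b ≠ 0) :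
    Module.finrank ℂ (Submodule.span ℂ {(Fin.append a (0 : Fin 3 → ℂ) : Fin 6 → ℂ),
      (Fin.append (0 : Fin 3 → ℂ) b : Fin 6 → ℂ)}) = 2 := by
  have := finrank_span_eq_card (li_pair a b ha hb)
  rwa [Matrix.range_cons_cons_empty, Fintype.card_fin] at this

theorem stmt_10 (f g : MvPolynomial (Fin 3) ℂ)
    (hf : f.IsHomogeneous 3) (hg : g.IsHomogeneous 3)
    (hfsm : f ≠ 0 ∧ ∀ x : Fin 3 → ℂ, x ≠ 0 → eval x f = 0 → ∃ i : Fin 3, eval x (pderiv i f) ≠ 0)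
    (hgsm : g ≠ 0 ∧ ∀ x : Fin 3 → ℂ, x ≠ 0 → eval x g = 0 → ∃ i : Fin 3, eval x (pderiv i g) ≠ 0)
    (ω : ℂ) (hω3 : ω ^ 3 = 1) (hω1 : ω ≠ 1)
    (F : MvPolynomial (Fin 6) ℂ)
    (hF : F = rename (Fin.castAdd 3) f + rename (Fin.natAdd 3) g)
    (u : (Fin 6 → ℂ) →ₗ[ℂ] (Fin 6 → ℂ))
    (hu : ∀ (z : Fin 6 → ℂ) (i : Fin 6), u z i = if (i : ℕ) < 3 then z i else ω * z i)
    (L : Submodule ℂ (Fin 6 → ℂ)) :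
    (Module.finrank ℂ L = 2 ∧ (∀ z ∈ L, eval z F = 0) ∧ L.map u = L) ↔
    (∃ a b : Fin 3 → ℂ, a ≠ 0 ∧ b ≠ 0 ∧ eval a f = 0 ∧ eval b g = 0 ∧
      L = Submodule.span ℂ {Fin.append a (0 : Fin 3 → ℂ), Fin.append (0 : Fin 3 → ℂ) b}) := by
  have huapp : ∀ x y : Fin 3 → ℂ, u (Fin.append x y : Fin 6 → ℂ) =
      (Fin.append x (ω • y) : Fin 6 → ℂ) := by
    intro x y
    ext i
    rw [hu]
    refine Fin.addCases (m := 3) (n := 3) (fun i => ?_) (fun i => ?_) i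
    · erw [Fin.append_left, Fin.append_left, if_pos i.2]
    · erw [Fin.append_right, Fin.append_right]
      rw [if_neg (by simp [Fin.natAdd])]
      rfl
  have hF' : ∀ x y : Fin 3 → ℂ, eval (Fin.append x y : Fin 6 → ℂ) F = eval x f + eval y g := by
    intro x y
    rw [hF]; exact eval_append f g x y
  have hf0 : eval (0 : Fin 3 → ℂ) f = 0 := by
    have := eval_smul_hom hf 0 0
    simpa using this
  have hg0 : eval (0 : Fin 3 → ℂ) g = 0 := by
    have := eval_smul_hom hg 0 0
    simpa using this
  constructor
  · rintro ⟨hdim, hvan, hmap⟩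
    have hsplit : ∀ x y : Fin 3 → ℂ, (Fin.append x y : Fin 6 → ℂ) ∈ L →
        (Fin.append x (0 : Fin 3 → ℂ) : Fin 6 → ℂ) ∈ L ∧
        (Fin.append (0 : Fin 3 → ℂ) y : Fin 6 → ℂ) ∈ L := by
      intro x y hxy
      have h1 : (Fin.append x (ω • y) : Fin 6 → ℂ) ∈ L := by
        rw [← huapp, ← hmap]; exact Submodule.mem_map_of_mem hxy
      have hne : ω - 1 ≠ 0 := sub_ne_zero.mpr hω1
      have h2 := L.add_mem (L.smul_mem ((ω - 1)⁻¹) h1) (L.smul_mem (-(ω - 1)⁻¹) hxy)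
      rw [append_lin] at h2
      have e1 : (ω - 1)⁻¹ • x + -(ω - 1)⁻¹ • x = 0 := by rw [neg_smul, add_neg_cancel]
      have e2 : (ω - 1)⁻¹ • ω • y + -(ω - 1)⁻¹ • y = y := by
        rw [smul_smul, ← add_smul, ← sub_eq_add_neg, ← mul_sub_one, inv_mul_cancel₀ hne, one_smul]
      rw [e1, e2] at h2
      refine ⟨?_, h2⟩
      have h3 := L.add_mem (L.smul_mem (1 : ℂ) hxy) (L.smul_mem (-1 : ℂ) h2)
      rw [append_lin] at h3
      simpa using h3
    obtain ⟨v, hv⟩ : ∃ v : Fin 2 → L, LinearIndependent ℂ v :=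
      ⟨_, (Module.finBasisOfFinrankEq ℂ L hdim).linearIndependent⟩
    have hpair : ∀ s t : ℂ, s • (v 0 : Fin 6 → ℂ) + t • (v 1 : Fin 6 → ℂ) = 0 →
        s = 0 ∧ t = 0 := by
      intro s t hst
      have hv' : LinearIndependent ℂ ![v 0, v 1] := by
        convert hv using 1
        ext i; fin_cases i <;> rfl
      exact LinearIndependent.pair_iff.mp hv' s t (Subtype.ext hst)
    obtain ⟨x0, y0, h0⟩ := exists_append (v 0 : Fin 6 → ℂ)
    obtain ⟨x1, y1, h1⟩ := exists_append (v 1 : Fin 6 → ℂ)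
    have hm0 := (v 0).2
    have hm1 := (v 1).2
    rw [h0] at hm0
    rw [h1] at hm1
    rw [h0, h1] at hpair
    obtain ⟨a, ha, haL⟩ : ∃ a : Fin 3 → ℂ, a ≠ 0 ∧
        (Fin.append a (0 : Fin 3 → ℂ) : Fin 6 → ℂ) ∈ L := by
      by_contra! H
      have hx0 : x0 = 0 := by
        by_contra h; exact H x0 h (hsplit _ _ hm0).1
      have hx1 : x1 = 0 := by
        by_contra h; exact H x1 h (hsplit _ _ hm1).1
      subst hx0 hx1
      refine no_line hg hgsm.2 y0 y1 ?_ ?_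
      · rw [LinearIndependent.pair_iff]
        intro s t hst
        apply hpair
        rw [append_lin, hst]
        ext i
        refine Fin.addCases (m := 3) (n := 3) (fun i => ?_) (fun i => ?_) i
        · erw [Fin.append_left]; simp
        · erw [Fin.append_right]; simp
      · intro s t
        have := hvan _ (L.add_mem (L.smul_mem s hm0) (L.smul_mem t hm1))
        rw [append_lin, hF'] at this
        rwa [smul_zero, smul_zero, add_zero, hf0, zero_add] at this
    obtain ⟨b, hb, hbL⟩ : ∃ b : Fin 3 → ℂ, b ≠ 0 ∧
        (Fin.append (0 : Fin 3 → ℂ) b : Fin 6 → ℂ) ∈ L := by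
      by_contra! H
      have hy0 : y0 = 0 := by
        by_contra h; exact H y0 h (hsplit _ _ hm0).2
      have hy1 : y1 = 0 := by
        by_contra h; exact H y1 h (hsplit _ _ hm1).2
      subst hy0 hy1
      refine no_line hf hfsm.2 x0 x1 ?_ ?_
      · rw [LinearIndependent.pair_iff]
        intro s t hst
        apply hpair
        rw [append_lin, hst]
        ext i
        refine Fin.addCases (m := 3) (n := 3) (fun i => ?_) (fun i => ?_) i
        · erw [Fin.append_left]; simp
        · erw [Fin.append_right]; simp
      · intro s t
        have := hvan _ (L.add_mem (L.smul_mem s hm0) (L.smul_mem t hm1))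
        rw [append_lin, hF'] at this
        rwa [smul_zero, smul_zero, add_zero, hg0, add_zero] at this
    refine ⟨a, b, ha, hb, ?_, ?_, ?_⟩
    · have := hvan _ haL
      rwa [hF', hg0, add_zero] at this
    · have := hvan _ hbL
      rwa [hF', hf0, zero_add] at this
    · symm
      apply Submodule.eq_of_le_of_finrank_eq
      · rw [Submodule.span_le]
        rintro z (rfl | rfl)
        · exact haL
        · exact hbL
      · rw [hdim]; exact finrank_pair a b ha hb
  · rintro ⟨a, b, ha, hb, hfa, hgb, rfl⟩
    have hω0 : ω ≠ 0 := by
      rintro rfl; simp at hω3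
    refine ⟨finrank_pair a b ha hb, ?_, ?_⟩
    · intro z hz
      obtain ⟨s, t, rfl⟩ := Submodule.mem_span_pair.mp hz
      erw [append_lin]
      rw [hF']
      simp [eval_smul_hom hf, eval_smul_hom hg, hfa, hgb]
    · have e1 : u (Fin.append a (0 : Fin 3 → ℂ) : Fin 6 → ℂ) =
          (Fin.append a (0 : Fin 3 → ℂ) : Fin 6 → ℂ) := by rw [huapp, smul_zero]
      have e2 : u (Fin.append (0 : Fin 3 → ℂ) b : Fin 6 → ℂ) =
          (Fin.append (0 : Fin 3 → ℂ) (ω • b) : Fin 6 → ℂ) := huapp _ _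
      have e3 : (Fin.append (0 : Fin 3 → ℂ) (ω • b) : Fin 6 → ℂ) =
          ω • (Fin.append (0 : Fin 3 → ℂ) b : Fin 6 → ℂ) := by
        have := append_lin ω 0 0 b 0 0
        simpa using this.symm
      have hle : (Submodule.span ℂ {(Fin.append a (0 : Fin 3 → ℂ) : Fin 6 → ℂ),
          (Fin.append (0 : Fin 3 → ℂ) b : Fin 6 → ℂ)}).map u ≤
          Submodule.span ℂ {(Fin.append a (0 : Fin 3 → ℂ) : Fin 6 → ℂ),
          (Fin.append (0 : Fin 3 → ℂ) b : Fin 6 → ℂ)} := by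
        rw [Submodule.map_span_le]
        rintro z (rfl | rfl)
        · rw [e1]; exact Submodule.subset_span (Or.inl rfl)
        · rw [e2, e3]
          exact Submodule.smul_mem _ _ (Submodule.subset_span (Or.inr rfl))
      apply Submodule.eq_of_le_of_finrank_eq hle
      have e4 := finrank_pair a (ω • b) ha (smul_ne_zero hω0 hb)
      rw [← e1, ← e2, ← Set.image_pair, ← Submodule.map_span] at e4
      exact e4.trans (finrank_pair a b ha hb).symm
end

section
/- Let $f \in \mathbb{C}[X_0,X_1,X_2]$ and $g \in \mathbb{C}[X_3,X_4,X_5]$ be homogeneous polynomials of degree 3 that each define a smooth plane curve, set $F(z_0,\dots,z_5) = f(z_0,z_1,z_2) + g(z_3,z_4,z_5)$, let $\omega$ be a primitive third root of unity, and let $u(z_0,\dots,z_5) = (z_0,z_1,z_2,\omega z_3,\omega z_4,\omega z_5)$. Then the map sending a pair $([a],[b])$, with $[a]$ a point of the plane cubic $\{f=0\} \subset \mathbb{P}^2$ and $[b]$ a point of the plane cubic $\{g=0\} \subset \mathbb{P}^2$, to the subspace $\mathrm{span}\big((a_0,a_1,a_2,0,0,0),\,(0,0,0,b_0,b_1,b_2)\big)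 \subseteq \mathbb{C}^6$ is a well-defined bijection from the product of the two curves onto the set of 2-dimensional linear subspaces $L \subseteq \mathbb{C}^6$ with $F|_L \equiv 0$ and $u(L) = L$. In other words, the fixed locus of the induced automorphism $u_X$ on the Fano variety of lines of $Y = \{F=0\}$ is in bijection with the product of the two plane cubic curves. -/
open MvPolynomial

lemma aux_eval_smul (f : MvPolynomial (Fin 3) ℂ) (n : ℕ) (hf : f.IsHomogeneous n) (c : ℂ)
    (x : Fin 3 → ℂ) : eval (c • x) f = c ^ n * eval x f := by
  rw [eval_eq', eval_eq', Finset.mul_sum]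
  refine Finset.sum_congr rfl fun d hd => ?_
  have h := hf (mem_support_iff.mp hd)
  have h2 : ∑ i, d i = n := by
    rw [← h, Finsupp.weight_apply, Finsupp.sum_fintype]
    · simp
    · simp
  simp only [Pi.smul_apply, smul_eq_mul, mul_pow, Finset.prod_mul_distrib]
  rw [Finset.prod_pow_eq_pow_sum, h2]
  ring

/-- restriction of a polynomial to a parametrized line -/
noncomputable def auxLine (x v : Fin 3 → ℂ) : MvPolynomial (Fin 3) ℂ →ₐ[ℂ] Polynomial ℂ :=
  aeval (fun i => Polynomial.C (x i) + Polynomial.X * Polynomial.C (v i))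

lemma auxLine_eval (x v : Fin 3 → ℂ) (f : MvPolynomial (Fin 3) ℂ) (t : ℂ) :
    (auxLine x v f).eval t = eval (x + t • v) f := by
  induction f using MvPolynomial.induction_on with
  | C a => simp [auxLine]
  | add p q hp hq => simp [hp, hq]
  | mul_X p i hp => rw [map_mul, Polynomial.eval_mul, hp]; simp [auxLine]; exact Or.inl (mul_comm _ _)

lemma auxLine_deriv (x v : Fin 3 → ℂ) (f : MvPolynomial (Fin 3) ℂ) :
    Polynomial.derivative (auxLine x v f) =
      ∑ i, Polynomial.C (v i) * auxLine x v (pderiv i f) := by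
  induction f using MvPolynomial.induction_on with
  | C a => simp [auxLine]
  | add p q hp hq => simp [hp, hq, mul_add, Finset.sum_add_distrib]
  | mul_X p i hp =>
    rw [map_mul, Polynomial.derivative_mul, hp]
    have : ∀ j, auxLine x v (pderiv j (p * X i)) =
      auxLine x v (pderiv j p) * auxLine x v (X i) +
        auxLine x v p * (if j = i then 1 else 0) := by
      intro j
      rw [pderiv_mul, map_add, map_mul, map_mul, pderiv_X]
      by_cases h : j = i
      · subst h; simp
      · simp [h]
    simp only [this, mul_add, Finset.sum_add_distrib, Finset.sum_mul]
    have hX : Polynomial.derivative (auxLine x v (X i)) = Polynomial.C (v i) := by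
      simp [auxLine]
    have hB : ∑ j, Polynomial.C (v j) * (auxLine x v p * (if j = i then 1 else 0)) =
        auxLine x v p * Polynomial.C (v i) := by
      simp only [mul_ite, mul_one, mul_zero, Finset.sum_ite_eq', Finset.mem_univ, if_true]
      exact mul_comm _ _
    rw [hX, hB]
    refine congrArg (· + auxLine x v p * Polynomial.C (v i)) ?_
    exact Finset.sum_congr rfl fun j _ => mul_assoc _ _ _

lemma aux_tangent (f : MvPolynomial (Fin 3) ℂ) (V : Submodule ℂ (Fin 3 → ℂ))
    (hV : ∀ x ∈ V, eval x f = 0) (x v : Fin 3 → ℂ) (hx : x ∈ V) (hv : v ∈ V) :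
    ∑ i, v i * eval x (pderiv i f) = 0 := by
  have h0 : auxLine x v f = 0 := by
    refine Polynomial.funext fun t => ?_
    rw [auxLine_eval, Polynomial.eval_zero]
    exact hV _ (V.add_mem hx (V.smul_mem _ hv))
  have h := auxLine_deriv x v f
  rw [h0] at h
  have h2 := congrArg (Polynomial.eval 0) h
  simpa [Polynomial.eval_finsetSum, auxLine_eval] using h2.symm

lemma aux_root_or_const (h : MvPolynomial (Fin 3) ℂ) (p q : Fin 3 → ℂ)
    (hn : ∀ t : ℂ, eval (p + t • q) h ≠ 0) :
    ∃ c, ∀ t : ℂ, eval (p + t • q) h = c := by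
  have hd : (auxLine p q h).degree = 0 := by
    by_contra hd
    obtain ⟨t, ht⟩ := IsAlgClosed.exists_root _ hd
    exact hn t (by rw [← auxLine_eval]; exact ht)
  refine ⟨(auxLine p q h).coeff 0, fun t => ?_⟩
  rw [← auxLine_eval, Polynomial.eq_C_of_degree_eq_zero hd]
  simp

lemma aux_zero (h : MvPolynomial (Fin 3) ℂ) (hh : h.IsHomogeneous 2) (p q : Fin 3 → ℂ) :
    ∃ s t : ℂ, (s ≠ 0 ∨ t ≠ 0) ∧ eval (s • p + t • q) h = 0 := by
  by_contra! hn
  obtain ⟨c, hc⟩ := aux_root_or_const h p q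
    (fun t => by have := hn 1 t (Or.inl one_ne_zero); rwa [one_smul] at this)
  obtain ⟨d, hd⟩ := aux_root_or_const h q p
    (fun t => by have := hn t 1 (Or.inr one_ne_zero); rwa [one_smul, add_comm] at this)
  have h1 : c = d := by
    rw [← hc 1, ← hd 1, one_smul, one_smul, add_comm]
  have h2 : d = 4 * c := by
    rw [← hc (1/2), ← hd 2]
    have : q + (2 : ℂ) • p = (2 : ℂ) • (p + (1 / 2 : ℂ) • q) := by
      rw [smul_add, smul_smul]; norm_num [add_comm]
    rw [this, aux_eval_smul h 2 hh]; norm_num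
  have h3 : c = 0 := by linear_combination (-1/3 : ℂ) * (h1 + h2)
  have := hn 1 0 (Or.inl one_ne_zero)
  rw [one_smul] at this
  exact this (by rw [hc 0, h3])

lemma aux_noline (f : MvPolynomial (Fin 3) ℂ) (hf : f.IsHomogeneous 3)
    (hsm : ∀ x : Fin 3 → ℂ, x ≠ 0 → eval x f = 0 → ∃ i : Fin 3, eval x (pderiv i f) ≠ 0)
    (V : Submodule ℂ (Fin 3 → ℂ)) (hV : ∀ x ∈ V, eval x f = 0)
    (hd : 2 ≤ Module.finrank ℂ V) : False := by
  obtain ⟨r, hr⟩ : ∃ r : Fin 3 → ℂ, ∀ v, ∃ c : ℂ, v - c • r ∈ V := by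
    have h1 : Module.finrank ℂ ((Fin 3 → ℂ) ⧸ V) ≤ 1 := by
      have := V.finrank_quotient_add_finrank
      rw [Module.finrank_fin_fun] at this
      omega
    obtain ⟨r, hr⟩ := finrank_le_one_iff.mp h1
    obtain ⟨r, rfl⟩ := V.mkQ_surjective r
    refine ⟨r, fun v => ?_⟩
    obtain ⟨c, hc⟩ := hr (V.mkQ v)
    refine ⟨c, ?_⟩
    rw [← Submodule.Quotient.mk_eq_zero]
    simpa [sub_eq_zero] using hc.symm
  have : Nontrivial V := Module.nontrivial_of_finrank_pos (R := ℂ) (by omega)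
  obtain ⟨p, hp⟩ := exists_ne (0 : V)
  obtain ⟨q, hq⟩ := exists_linearIndependent_pair_of_one_lt_finrank (R := ℂ) (M := V)
    (by omega) hp
  rw [LinearIndependent.pair_iff] at hq
  have hQ : (∑ i, C (r i) * pderiv i f).IsHomogeneous 2 := by
    refine IsHomogeneous.sum _ _ _ fun i _ => ?_
    have := (isHomogeneous_C (Fin 3) (r i)).mul (hf.pderiv (i := i))
    simpa using this
  obtain ⟨s, t, hst, h0⟩ := aux_zero _ hQ p q
  have hx0 : (s • (p : Fin 3 → ℂ) + t • (q : Fin 3 → ℂ)) ≠ 0 := by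
    intro h
    have := hq s t (by ext1; simpa using h)
    tauto
  have hxV : (s • (p : Fin 3 → ℂ) + t • (q : Fin 3 → ℂ)) ∈ V :=
    V.add_mem (V.smul_mem _ p.2) (V.smul_mem _ q.2)
  generalize (s • (p : Fin 3 → ℂ) + t • (q : Fin 3 → ℂ)) = x at *
  obtain ⟨i, hi⟩ := hsm x hx0 (hV x hxV)
  obtain ⟨c, hc⟩ := hr (Pi.single i 1)
  have h1 := aux_tangent f V hV x _ hxV hc
  have h0' : ∑ i, r i * eval x (pderiv i f) = 0 := by simpa using h0
  apply hi
  have : ∑ j, (Pi.single i 1 - c • r : Fin 3 → ℂ) j * eval x (pderiv j f) =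
      eval x (pderiv i f) - c * ∑ j, r j * eval x (pderiv j f) := by
    simp only [Pi.sub_apply, Pi.smul_apply, smul_eq_mul, sub_mul, Finset.sum_sub_distrib,
      Finset.mul_sum, mul_assoc]
    congr 1
    simp [Pi.single_apply]
  rw [this, h0'] at h1
  simpa using h1

/-- first and second projections -/
def auxP1 : (Fin 6 → ℂ) →ₗ[ℂ] (Fin 3 → ℂ) := LinearMap.funLeft ℂ ℂ (Fin.castAdd 3)

/-- second projection -/
def auxP2 : (Fin 6 → ℂ) →ₗ[ℂ] (Fin 3 → ℂ) := LinearMap.funLeft ℂ ℂ (Fin.natAdd 3)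

lemma auxP1_append (a b : Fin 3 → ℂ) : auxP1 (Fin.append a b) = a := by
  ext i; exact Fin.append_left a b i

lemma auxP2_append (a b : Fin 3 → ℂ) : auxP2 (Fin.append a b) = b := by
  ext i; exact Fin.append_right a b i

lemma aux_ext {z w : Fin 6 → ℂ} (h1 : auxP1 z = auxP1 w) (h2 : auxP2 z = auxP2 w) : z = w := by
  ext i
  refine Fin.addCases (m := 3) (n := 3) (fun j => ?_) (fun j => ?_) i
  · exact congrFun h1 j
  · exact congrFun h2 j

lemma aux_finrank (a b : Fin 3 → ℂ) (ha : a ≠ 0) (hb : b ≠ 0) :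
    Module.finrank ℂ (Submodule.span ℂ {Fin.append a (0 : Fin 3 → ℂ),
      Fin.append (0 : Fin 3 → ℂ) b} : Submodule ℂ (Fin 6 → ℂ)) = 2 := by
  have hli : LinearIndependent ℂ ![(Fin.append a (0 : Fin 3 → ℂ) : Fin 6 → ℂ),
      Fin.append (0 : Fin 3 → ℂ) b] := by
    rw [LinearIndependent.pair_iff]
    intro s t h
    have h1 := congrArg auxP1 h
    have h2 := congrArg auxP2 h
    simp only [map_add, map_smul, auxP1_append, auxP2_append, map_zero, smul_zero, add_zero,
      zero_add, smul_eq_zero, ha, hb, or_false] at h1 h2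
    exact ⟨h1, h2⟩
  have := finrank_span_eq_card hli
  rw [Matrix.range_cons_cons_empty] at this
  simpa using this

lemma aux_comap1 (a b : Fin 3 → ℂ) :
    (Submodule.span ℂ {Fin.append a (0 : Fin 3 → ℂ),
      Fin.append (0 : Fin 3 → ℂ) b} : Submodule ℂ (Fin 6 → ℂ)).map auxP1 =
      Submodule.span ℂ {a} := by
  rw [Submodule.map_span, Set.image_pair, auxP1_append, auxP1_append, Set.pair_comm,
    Submodule.span_insert_zero]

lemma aux_comap2 (a b : Fin 3 → ℂ) :
    (Submodule.span ℂ {Fin.append a (0 : Fin 3 → ℂ),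
      Fin.append (0 : Fin 3 → ℂ) b} : Submodule ℂ (Fin 6 → ℂ)).map auxP2 =
      Submodule.span ℂ {b} := by
  rw [Submodule.map_span, Set.image_pair, auxP2_append, auxP2_append,
    Submodule.span_insert_zero]

lemma aux_finrank_map (P : (Fin 6 → ℂ) →ₗ[ℂ] (Fin 3 → ℂ)) (L : Submodule ℂ (Fin 6 → ℂ))
    (hP : ∀ z ∈ L, P z = 0 → z = 0) : Module.finrank ℂ (L.map P) = Module.finrank ℂ L := by
  have hinj : Function.Injective (P.domRestrict L) := by
    rw [← LinearMap.ker_eq_bot, LinearMap.ker_eq_bot']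
    intro z hz
    exact Subtype.ext (hP z z.2 hz)
  have := LinearMap.finrank_range_of_inj hinj
  rwa [LinearMap.range_domRestrict] at this

/-- The map sending a pair `([a], [b])` of points of the plane cubics
`{f = 0}` and `{g = 0}` to the subspace `span((a,0),(0,b)) ⊆ ℂ⁶` is a well-defined
bijection from the product of the two curves onto the set of 2-dimensional subspaces
`L ⊆ ℂ⁶` with `F|_L ≡ 0` and `u(L) = L`: the fixed locus of `u_X` on the Fano variety
of lines of `{F = 0}` is in bijection with the product of the two plane cubics. -/
theorem stmt_11 (f g : MvPolynomial (Fin 3) ℂ)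
    (hf : f.IsHomogeneous 3) (hg : g.IsHomogeneous 3)
    (hfsm : f ≠ 0 ∧ ∀ x : Fin 3 → ℂ, x ≠ 0 → eval x f = 0 → ∃ i : Fin 3, eval x (pderiv i f) ≠ 0)
    (hgsm : g ≠ 0 ∧ ∀ x : Fin 3 → ℂ, x ≠ 0 → eval x g = 0 → ∃ i : Fin 3, eval x (pderiv i g) ≠ 0)
    (ω : ℂ) (hω3 : ω ^ 3 = 1) (hω1 : ω ≠ 1)
    (F : MvPolynomial (Fin 6) ℂ)
    (hF : F = rename (Fin.castAdd 3) f + rename (Fin.natAdd 3) g)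
    (u : (Fin 6 → ℂ) →ₗ[ℂ] (Fin 6 → ℂ))
    (hu : ∀ (z : Fin 6 → ℂ) (i : Fin 6), u z i = if (i : ℕ) < 3 then z i else ω * z i) :
    ∃ Φ : {p : Projectivization ℂ (Fin 3 → ℂ) × Projectivization ℂ (Fin 3 → ℂ) //
            eval p.1.rep f = 0 ∧ eval p.2.rep g = 0} ≃
          {L : Submodule ℂ (Fin 6 → ℂ) //
            Module.finrank ℂ L = 2 ∧ (∀ z ∈ L, eval z F = 0) ∧ L.map u = L},
      ∀ p, (Φ p : Submodule ℂ (Fin 6 → ℂ)) =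
        Submodule.span ℂ {Fin.append p.1.1.rep (0 : Fin 3 → ℂ),
                          Fin.append (0 : Fin 3 → ℂ) p.1.2.rep} := by
  have hω0 : ω ≠ 0 := by rintro rfl; norm_num at hω3
  have hFe : ∀ z, eval z F = eval (auxP1 z) f + eval (auxP2 z) g := by
    intro z
    rw [hF, map_add, eval_rename, eval_rename]; rfl
  have hu1 : ∀ z, auxP1 (u z) = auxP1 z := by
    intro z; ext i
    change u z (Fin.castAdd 3 i) = z (Fin.castAdd 3 i)
    rw [hu]; simp
  have hu2 : ∀ z, auxP2 (u z) = ω • auxP2 z := by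
    intro z; ext i
    change u z (Fin.natAdd 3 i) = ω * z (Fin.natAdd 3 i)
    rw [hu]; simp
  let S : Projectivization ℂ (Fin 3 → ℂ) × Projectivization ℂ (Fin 3 → ℂ) →
      Submodule ℂ (Fin 6 → ℂ) := fun p =>
    Submodule.span ℂ {Fin.append p.1.rep (0 : Fin 3 → ℂ), Fin.append (0 : Fin 3 → ℂ) p.2.rep}
  have hS : ∀ p : Projectivization ℂ (Fin 3 → ℂ) × Projectivization ℂ (Fin 3 → ℂ),
      (eval p.1.rep f = 0 ∧ eval p.2.rep g = 0) →
      (Module.finrank ℂ (S p) = 2 ∧ (∀ z ∈ S p, eval z F = 0) ∧ (S p).map u = S p) := by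
    rintro p ⟨h1, h2⟩
    refine ⟨aux_finrank _ _ p.1.rep_nonzero p.2.rep_nonzero, ?_, ?_⟩
    · intro z hz
      obtain ⟨s, t, rfl⟩ := Submodule.mem_span_pair.mp hz
      rw [hFe]
      simp only [map_add, map_smul, auxP1_append, auxP2_append, smul_zero, add_zero, zero_add]
      rw [aux_eval_smul f 3 hf, aux_eval_smul g 3 hg, h1, h2]; simp
    · have e1 : u (Fin.append p.1.rep (0 : Fin 3 → ℂ)) = Fin.append p.1.rep (0 : Fin 3 → ℂ) := by
        apply aux_ext
        · rw [hu1]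
        · rw [hu2, auxP2_append, smul_zero]
      have e2 : u (Fin.append (0 : Fin 3 → ℂ) p.2.rep) =
          ω • (Fin.append (0 : Fin 3 → ℂ) p.2.rep : Fin 6 → ℂ) := by
        apply aux_ext
        · rw [hu1, map_smul, auxP1_append, smul_zero]
        · rw [hu2, map_smul]
      change Submodule.map u (Submodule.span ℂ _) = Submodule.span ℂ _
      rw [Submodule.map_span, Set.image_pair, e1, e2, Submodule.span_insert,
        Submodule.span_insert, Submodule.span_singleton_smul_eq (IsUnit.mk0 ω hω0)]
  have key : ∀ L : Submodule ℂ (Fin 6 → ℂ), L.map u = L → ∀ z ∈ L,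
      Fin.append (auxP1 z) (0 : Fin 3 → ℂ) ∈ L ∧ Fin.append (0 : Fin 3 → ℂ) (auxP2 z) ∈ L := by
    intro L hL z hz
    have huz : u z ∈ L := by rw [← hL]; exact Submodule.mem_map_of_mem hz
    have hne : ω - 1 ≠ 0 := sub_ne_zero.mpr hω1
    have e2 : (Fin.append (0 : Fin 3 → ℂ) (auxP2 z) : Fin 6 → ℂ) = (ω - 1)⁻¹ • (u z - z) := by
      apply aux_ext
      · simp [auxP1_append, hu1]
      · rw [auxP2_append, map_smul, map_sub, hu2]
        have : ω • auxP2 z - auxP2 z = (ω - 1) • auxP2 z := by rw [sub_smul, one_smul]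
        rw [this, smul_smul, inv_mul_cancel₀ hne, one_smul]
    have m2 : Fin.append (0 : Fin 3 → ℂ) (auxP2 z) ∈ L := by
      have : (ω - 1)⁻¹ • (u z - z) ∈ L := L.smul_mem _ (L.sub_mem huz hz)
      rwa [← e2] at this
    refine ⟨?_, m2⟩
    have e1 : (Fin.append (auxP1 z) (0 : Fin 3 → ℂ) : Fin 6 → ℂ) =
        z - (Fin.append (0 : Fin 3 → ℂ) (auxP2 z) : Fin 6 → ℂ) := by
      apply aux_ext
      · rw [map_sub, auxP1_append, auxP1_append, sub_zero]
      · rw [map_sub, auxP2_append, auxP2_append, sub_self]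
    have : z - (Fin.append (0 : Fin 3 → ℂ) (auxP2 z) : Fin 6 → ℂ) ∈ L := L.sub_mem hz m2
    rwa [← e1] at this
  have hg0 : eval (0 : Fin 3 → ℂ) g = 0 := by
    have := aux_eval_smul g 3 hg 0 0
    simpa using this
  have hf0 : eval (0 : Fin 3 → ℂ) f = 0 := by
    have := aux_eval_smul f 3 hf 0 0
    simpa using this
  let Φ : {p : Projectivization ℂ (Fin 3 → ℂ) × Projectivization ℂ (Fin 3 → ℂ) //
            eval p.1.rep f = 0 ∧ eval p.2.rep g = 0} →
          {L : Submodule ℂ (Fin 6 → ℂ) //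
            Module.finrank ℂ L = 2 ∧ (∀ z ∈ L, eval z F = 0) ∧ L.map u = L} :=
    fun p => ⟨S p.1, hS p.1 p.2⟩
  refine ⟨Equiv.ofBijective Φ ⟨?_, ?_⟩, fun p => rfl⟩
  · rintro ⟨p, hp⟩ ⟨q, hq⟩ h
    have h' : S p = S q := congrArg Subtype.val h
    refine Subtype.ext (Prod.ext ?_ ?_)
    · apply Projectivization.submodule_injective
      rw [Projectivization.submodule_eq, Projectivization.submodule_eq,
        ← aux_comap1 p.1.rep p.2.rep, ← aux_comap1 q.1.rep q.2.rep]
      exact congrArg (Submodule.map auxP1) h'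
    · apply Projectivization.submodule_injective
      rw [Projectivization.submodule_eq, Projectivization.submodule_eq,
        ← aux_comap2 p.1.rep p.2.rep, ← aux_comap2 q.1.rep q.2.rep]
      exact congrArg (Submodule.map auxP2) h'
  · rintro ⟨L, hL2, hLF, hLu⟩
    have hA : ∀ x ∈ L.map auxP1, eval x f = 0 := by
      rintro _ ⟨z, hz, rfl⟩
      have := hLF _ (key L hLu z hz).1
      rwa [hFe, auxP1_append, auxP2_append, hg0, add_zero] at this
    have hB : ∀ x ∈ L.map auxP2, eval x g = 0 := by
      rintro _ ⟨z, hz, rfl⟩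
      have := hLF _ (key L hLu z hz).2
      rwa [hFe, auxP1_append, auxP2_append, hf0, zero_add] at this
    obtain ⟨z, hz, ha⟩ : ∃ z ∈ L, auxP1 z ≠ 0 := by
      by_contra! hcon
      refine aux_noline g hg hgsm.2 _ hB ?_
      rw [aux_finrank_map auxP2 L, hL2]
      intro z hz h0
      exact aux_ext (by rw [hcon z hz, map_zero]) (by rw [h0, map_zero])
    obtain ⟨w, hw, hb⟩ : ∃ w ∈ L, auxP2 w ≠ 0 := by
      by_contra! hcon
      refine aux_noline f hf hfsm.2 _ hA ?_
      rw [aux_finrank_map auxP1 L, hL2]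
      intro z hz h0
      exact aux_ext (by rw [h0, map_zero]) (by rw [hcon z hz, map_zero])
    obtain ⟨c, hc⟩ := Projectivization.exists_smul_eq_mk_rep ℂ (auxP1 z) ha
    obtain ⟨d, hd⟩ := Projectivization.exists_smul_eq_mk_rep ℂ (auxP2 w) hb
    set p := Projectivization.mk ℂ (auxP1 z) ha
    set q := Projectivization.mk ℂ (auxP2 w) hb
    have hp : p.rep = auxP1 ((c : ℂ) • z) := by rw [← hc, map_smul]; rfl
    have hq : q.rep = auxP2 ((d : ℂ) • w) := by rw [← hd, map_smul]; rfl
    have hcz : (c : ℂ) • z ∈ L := L.smul_mem _ hz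
    have hdw : (d : ℂ) • w ∈ L := L.smul_mem _ hw
    have hpq : eval (p, q).1.rep f = 0 ∧ eval (p, q).2.rep g = 0 := by
      refine ⟨?_, ?_⟩
      · change eval p.rep f = 0
        rw [hp]; exact hA _ (Submodule.mem_map_of_mem hcz)
      · change eval q.rep g = 0
        rw [hq]; exact hB _ (Submodule.mem_map_of_mem hdw)
    refine ⟨⟨(p, q), hpq⟩, Subtype.ext ?_⟩
    change S (p, q) = L
    refine Submodule.eq_of_le_of_finrank_eq ?_ ((hS _ hpq).1.trans hL2.symm)
    refine Submodule.span_le.mpr ?_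
    rintro x (rfl | rfl)
    · change Fin.append p.rep (0 : Fin 3 → ℂ) ∈ L
      rw [hp]; exact (key L hLu _ hcz).1
    · change Fin.append (0 : Fin 3 → ℂ) q.rep ∈ L
      rw [hq]; exact (key L hLu _ hdw).2
end
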